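/- (Matrix Radial Isotropy, generic case.) Let F = (X_1, …, X_n) with X_i ∈ ℝ^{d×d_i} be a generic matrix frame and let c = (c_1,…,c_n) ∈ ℚ^n_{>0} with ∑_{i=1}^n c_i = d. Then the following are equivalent: (i) c lies in the relative (intrinsic) interior of the orbit polytope K_F; (ii) (F, c) can be transformed into a radial isotropic frame, i.e. there exists A ∈ GL(d,ℝ) with ∑_{i=1}^n c_i·(A·X_i)(A·X_i)ᵀ/‖A·X_i‖_F² = I_d; (iii) f_F(c) is finite and the infimum defining f_F(c) is attained at some point t ∈ ℝ^n. -/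

import Mathlib

open scoped BigOperators
open Matrix

namespace MFrames

/-- The squared Frobenius norm of a real matrix. -/
noncomputable def frobSq {α β : Type*} [Fintype α] [Fintype β] (X : Matrix α β ℝ) : ℝ :=
  ∑ i, ∑ j, X i j ^ 2

variable {d n : ℕ} {m : Fin n → ℕ}

/-- Squared distance between two tuples of matrices. -/
noncomputable def dist2 (F G : ∀ i : Fin n, Matrix (Fin d) (Fin (m i)) ℝ) : ℝ :=
  ∑ i, frobSq (F i - G i)

/-- The frame operator `∑ Xᵢ Xᵢᵀ`. -/
noncomputable def frameOp (F : ∀ i : Fin n, Matrix (Fin d) (Fin (m i)) ℝ) :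
    Matrix (Fin d) (Fin d) ℝ :=
  ∑ i, F i * (F i)ᵀ

/-- `F` is a matrix frame: `∑ Xᵢ Xᵢᵀ` is positive definite. -/
def IsMatrixFrame (F : ∀ i : Fin n, Matrix (Fin d) (Fin (m i)) ℝ) : Prop :=
  (frameOp F).PosDef

/-- `F` is an ε-nearly equal-norm Parseval matrix frame. -/
def NearlyENParseval (ε : ℝ) (F : ∀ i : Fin n, Matrix (Fin d) (Fin (m i)) ℝ) : Prop :=
  (frameOp F - (1 - ε) • (1 : Matrix (Fin d) (Fin d) ℝ)).PosSemidef ∧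
  ((1 + ε) • (1 : Matrix (Fin d) (Fin d) ℝ) - frameOp F).PosSemidef ∧
  ∀ i, (1 - ε) * ((d : ℝ) / n) ≤ frobSq (F i) ∧ frobSq (F i) ≤ (1 + ε) * ((d : ℝ) / n)

/-- `F` is an equal-norm Parseval matrix frame. -/
def EqualNormParseval (F : ∀ i : Fin n, Matrix (Fin d) (Fin (m i)) ℝ) : Prop :=
  frameOp F = 1 ∧ ∀ i, frobSq (F i) = (d : ℝ) / n

/-- The columns of the concatenated matrix `[X₁ | … | Xₙ]`. -/
def col (F : ∀ i : Fin n, Matrix (Fin d) (Fin (m i)) ℝ) (p : (i : Fin n) × Fin (m i)) :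
    Fin d → ℝ :=
  fun r => F p.1 r p.2

/-- `F` is generic: `n > d` and any `d` of the columns of `[X₁ | … | Xₙ]` are linearly
independent (hence a basis of `ℝ^d`). -/
def Generic (F : ∀ i : Fin n, Matrix (Fin d) (Fin (m i)) ℝ) : Prop :=
  d < n ∧ ∀ S : Finset ((i : Fin n) × Fin (m i)), S.card = d →
    LinearIndependent ℝ (fun p : S => col F (p : (i : Fin n) × Fin (m i)))

/-- Column span of a matrix. -/
def colSpan {k : ℕ} (X : Matrix (Fin d) (Fin k) ℝ) : Submodule ℝ (Fin d → ℝ) :=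
  Submodule.span ℝ (Set.range Xᵀ)

/-- The orbit polytope `K_F` of a tuple of matrices. -/
def orbitPolytope (F : ∀ i : Fin n, Matrix (Fin d) (Fin (m i)) ℝ) : Set (Fin n → ℝ) :=
  {c | (∀ i, 0 ≤ c i) ∧ (∑ i, c i = d) ∧
    ∀ I : Finset (Fin n),
      ∑ i ∈ I, c i ≤ (Module.finrank ℝ ↥(⨆ i ∈ I, colSpan (F i)) : ℝ)}

/-- `Φ_F(t) = log det (∑ e^{tᵢ} Xᵢ Xᵢᵀ)`. -/
noncomputable def Phi (F : ∀ i : Fin n, Matrix (Fin d) (Fin (m i)) ℝ) (t : Fin n → ℝ) : ℝ :=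
  Real.log (∑ i, Real.exp (t i) • (F i * (F i)ᵀ)).det

/-- The objective function `Φ_F(t) - ⟨t, c⟩` whose infimum over `t` is `f_F(c)`. -/
noncomputable def obj (F : ∀ i : Fin n, Matrix (Fin d) (Fin (m i)) ℝ)
    (c : Fin n → ℝ) (t : Fin n → ℝ) : ℝ :=
  Phi F t - ∑ i, t i * c i

/-- `Δ_S` for `S ∈ 𝒜`, where `S` is encoded as a function `σ` assigning to each `i` a subset
`σ i ⊆ {1,…,dᵢ}` of the columns of `Xᵢ` (with `i ∈ S` iff `σ i ≠ ∅`). -/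
noncomputable def Delta (F : ∀ i : Fin n, Matrix (Fin d) (Fin (m i)) ℝ)
    (σ : ∀ i : Fin n, Finset (Fin (m i))) : ℝ :=
  (∑ i, ∑ k ∈ σ i, Matrix.of (fun r s : Fin d => F i r k * F i s k)).det

/-- The index set `𝒜`: collections of subsets of columns with `d` columns in total. -/
def indexA (d : ℕ) (m : Fin n → ℕ) : Finset (∀ i : Fin n, Finset (Fin (m i))) :=
  Finset.univ.filter fun σ => (∑ i, (σ i).card) = d

/-- Membership in the semialgebraic set `𝕍(F, c)`.  (Summing `(σ i).card • ⋯` over all of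
`𝒜` is the same as summing `|Sᵢ| • ⋯` over those `S ∈ 𝒜` with `i ∈ S`.) -/
noncomputable def inVariety (F : ∀ i : Fin n, Matrix (Fin d) (Fin (m i)) ℝ)
    (c ξ : Fin n → ℝ) : Prop :=
  (∀ i, 0 < ξ i) ∧ ∀ i,
    (∑ σ ∈ indexA d m, ((σ i).card : ℝ) * (∏ l, ξ l ^ (σ l).card) * Delta F σ)
      = c i * ∑ σ ∈ indexA d m, (∏ l, ξ l ^ (σ l).card) * Delta F σ

/-- `A` transforms `(F, c)` into a radial isotropic frame. -/
noncomputable def TransformsToRIF (F : ∀ i : Fin n, Matrix (Fin d) (Fin (m i)) ℝ)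
    (c : Fin n → ℝ) (A : Matrix (Fin d) (Fin d) ℝ) : Prop :=
  ∑ i, (c i / frobSq (A * F i)) • ((A * F i) * (A * F i)ᵀ) = 1

/-- Columns of `X` all orthogonal to the subspace `T`, i.e. `Col(X) ⊆ T^⊥`. -/
def colsPerp {k : ℕ} (X : Matrix (Fin d) (Fin k) ℝ) (T : Submodule ℝ (Fin d → ℝ)) : Prop :=
  ∀ x ∈ T, Xᵀ.mulVec x = 0

end MFrames

/-! By Cauchy–Binet, `det (∑ e^{tᵢ} Xᵢ Xᵢᵀ)` is a positive combination of exponentials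
`e^{⟨a, t⟩}`, where `a` runs over the vectors counting the contributions of the blocks `Xᵢ` to a
basis of `ℝ^d` formed by columns; Edmonds' greedy argument identifies the convex hull of these
exponents with `K_F`. If `c` is a convex combination of the exponents with strictly positive
coefficients, i.e. lies in the relative interior of `K_F`, then `Φ_F(t) - ⟨t, c⟩` attains its
infimum; conversely, the gradient of `Φ_F` at any point is such a combination. This gradient is the
vector of leverage scores `e^{tᵢ} tr(M⁻¹ Xᵢ Xᵢᵀ)`, where `M = ∑ e^{tᵢ} Xᵢ Xᵢᵀ`. If `A M Aᵀ = 1`, the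
scores are `e^{tᵢ} ‖A Xᵢ‖_F²`; hence they equal `c` precisely when `e^{tᵢ} = cᵢ / ‖A Xᵢ‖_F²`, which
turns `A M Aᵀ = 1` into radial isotropy. -/

namespace MFrames

section RelativeInterior

variable {E : Type*} [NormedAddCommGroup E] [NormedSpace ℝ E] {K : Set E} {x : E}

lemma exists_add_smul_sub_mem_of_mem_intrinsicInterior (hx : x ∈ intrinsicInterior ℝ K) {y : E}
    (hy : y ∈ K) : ∃ ε : ℝ, 0 < ε ∧ x + ε • (x - y) ∈ K := by
  obtain ⟨z, hz, rfl⟩ := mem_intrinsicInterior.1 hx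
  let line : ℝ → affineSpan ℝ K := fun s ↦
    ⟨AffineMap.lineMap (z : E) y (-s), AffineMap.lineMap_mem _ z.2 (subset_affineSpan ℝ K hy)⟩
  have line_zero : line 0 = z := Subtype.ext (by simp [line])
  have line_continuous : Continuous line :=
    (AffineMap.lineMap_continuous.comp continuous_neg).subtype_mk _
  have near : ∀ᶠ s in nhds 0, line s ∈ interior ((↑) ⁻¹' K : Set (affineSpan ℝ K)) :=
    line_continuous.continuousAt.eventually_mem
      (line_zero ▸ isOpen_interior.mem_nhds hz)
  obtain ⟨ε, hε, hεpos⟩ :=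
    ((near.filter_mono nhdsWithin_le_nhds).and (self_mem_nhdsWithin (s := Set.Ioi 0))).exists
  refine ⟨ε, hεpos, ?_⟩
  convert! interior_subset hε using 1
  simp only [line, Set.mem_preimage, AffineMap.lineMap_apply_module]
  congr! 1
  module

/-- The homothety centred at a prolongation `w` of the segment from an interior point `z` through
`x` maps `K` into itself and `z` to `x`. -/
lemma mem_intrinsicInterior_of_forall_exists_add_smul_sub_mem [FiniteDimensional ℝ E]
    (hK : Convex ℝ K) (hx : x ∈ K) (h : ∀ y ∈ K, ∃ ε : ℝ, 0 < ε ∧ x + ε • (x - y) ∈ K) :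
    x ∈ intrinsicInterior ℝ K := by
  obtain ⟨_, ⟨z, hz, rfl⟩⟩ := Set.Nonempty.intrinsicInterior hK ⟨x, hx⟩
  have hzK : (z : E) ∈ K := interior_subset (s := ((↑) ⁻¹' K : Set (affineSpan ℝ K))) hz
  obtain ⟨ε, hε, hw⟩ := h z hzK
  set w := x + ε • (x - z) with hw_def
  let expand : affineSpan ℝ K → affineSpan ℝ K := fun y ↦
    ⟨AffineMap.lineMap w (y : E) ((1 + ε) / ε),
      AffineMap.lineMap_mem _ (subset_affineSpan ℝ K hw) y.2⟩
  have expand_continuous : Continuous expand :=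
    ((AffineMap.homothety_continuous w _).comp continuous_subtype_val).subtype_mk _
  have expand_x : expand ⟨x, subset_affineSpan ℝ K hx⟩ = z := by
    apply Subtype.ext
    simp only [expand, AffineMap.lineMap_apply_module, hw_def]
    match_scalars <;> field_simp <;> ring
  have mem_of_expand_mem {y : affineSpan ℝ K} (hy : (expand y : E) ∈ K) : (y : E) ∈ K := by
    convert hK hw hy (a := 1 / (1 + ε)) (b := ε / (1 + ε)) (by positivity) (by positivity)
      (by field_simp) using 1
    simp only [expand, AffineMap.lineMap_apply_module]
    match_scalars <;> field_simp <;> ring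
  refine mem_intrinsicInterior.2 ⟨⟨x, subset_affineSpan ℝ K hx⟩, mem_interior.2
    ⟨expand ⁻¹' interior ((↑) ⁻¹' K : Set (affineSpan ℝ K)), fun y hy ↦ ?_,
      isOpen_interior.preimage expand_continuous, ?_⟩, rfl⟩
  · exact mem_of_expand_mem (interior_subset (s := ((↑) ⁻¹' K : Set (affineSpan ℝ K))) hy)
  · rwa [Set.mem_preimage, expand_x]

variable {ι : Type*} [Fintype ι] {a : ι → E}

lemma mem_convexHull_range_iff :
    x ∈ convexHull ℝ (Set.range a) ↔ ∃ p : ι → ℝ, (∀ i, 0 ≤ p i) ∧ ∑ i, p i = 1 ∧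
      ∑ i, p i • a i = x := by
  classical
  rw [show Set.range a = Fintype.linearCombination ℝ a '' Set.range fun i ↦ Pi.single i 1 by
      rw [← Set.range_comp]; congr! 1; ext; simp, ← LinearMap.image_convexHull,
    convexHull_rangle_single_eq_stdSimplex]
  simp [stdSimplex, Fintype.linearCombination_apply, and_assoc]

lemma exists_pos_of_mem_intrinsicInterior_convexHull_range
    (hx : x ∈ intrinsicInterior ℝ (convexHull ℝ (Set.range a))) :
    ∃ p : ι → ℝ, (∀ i, 0 < p i) ∧ ∑ i, p i = 1 ∧ ∑ i, p i • a i = x := by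
  have : Nonempty ι := Set.range_nonempty_iff_nonempty.1
    (convexHull_nonempty_iff.1 ⟨x, intrinsicInterior_subset hx⟩)
  let u : ℝ := (Fintype.card ι : ℝ)⁻¹
  have hu : 0 < u := inv_pos.2 (Nat.cast_pos.2 Fintype.card_pos)
  have sum_u : ∑ _i : ι, u = 1 := by simp [u]
  have centroid_mem : ∑ i, u • a i ∈ convexHull ℝ (Set.range a) :=
    mem_convexHull_range_iff.2 ⟨fun _ ↦ u, fun _ ↦ hu.le, sum_u, rfl⟩
  obtain ⟨ε, hε, hmem⟩ := exists_add_smul_sub_mem_of_mem_intrinsicInterior hx centroid_mem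
  obtain ⟨q, hq, hq_sum, hqx⟩ := mem_convexHull_range_iff.1 hmem
  refine ⟨fun i ↦ (1 + ε)⁻¹ * (q i + ε * u), fun i ↦ ?_, ?_, ?_⟩
  · have := hq i
    positivity
  · rw [← Finset.mul_sum, Finset.sum_add_distrib, hq_sum, ← Finset.mul_sum, sum_u, mul_one,
      inv_mul_cancel₀ (by positivity)]
  · simp only [mul_smul, add_smul, ← Finset.smul_sum, Finset.sum_add_distrib, hqx]
    match_scalars
    · field_simp
    · ring

lemma sum_smul_mem_intrinsicInterior_convexHull_range [FiniteDimensional ℝ E] {p : ι → ℝ}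
    (hp : ∀ i, 0 < p i) (hp_sum : ∑ i, p i = 1) :
    ∑ i, p i • a i ∈ intrinsicInterior ℝ (convexHull ℝ (Set.range a)) := by
  refine mem_intrinsicInterior_of_forall_exists_add_smul_sub_mem (convex_convexHull ℝ _)
    (mem_convexHull_range_iff.2 ⟨p, fun i ↦ (hp i).le, hp_sum, rfl⟩) fun y hy ↦ ?_
  obtain ⟨q, -, hq_sum, rfl⟩ := mem_convexHull_range_iff.1 hy
  have pos_near : ∀ᶠ ε : ℝ in nhds 0, ∀ i, 0 < p i + ε * (p i - q i) :=
    Filter.eventually_all.2 fun i ↦ (show ContinuousAt (fun ε ↦ p i + ε * (p i - q i)) 0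
      by fun_prop).eventually_const_lt (by simpa using hp i)
  obtain ⟨ε, hε, hεpos⟩ := ((pos_near.filter_mono nhdsWithin_le_nhds).and
    (self_mem_nhdsWithin (s := Set.Ioi 0))).exists
  refine ⟨ε, hεpos, mem_convexHull_range_iff.2
    ⟨fun i ↦ p i + ε * (p i - q i), fun i ↦ (hε i).le, ?_, ?_⟩⟩
  · simp [Finset.sum_add_distrib, ← Finset.mul_sum, hp_sum, hq_sum]
  · simp [add_smul, mul_smul, sub_smul, Finset.sum_add_distrib, ← Finset.smul_sum]

end RelativeInterior

section ExponentialSum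

variable {ι κ : Type*} [Fintype ι] {w p : ι → ℝ}

lemma isCompact_setOf_sum_exp_le (hw : ∀ i, 0 < w i) (hp : ∀ i, 0 < p i)
    {V : Submodule ℝ (ι → ℝ)} (hV : ∀ x ∈ V, ∑ i, p i * x i = 0) (R : ℝ) :
    IsCompact {x ∈ (V : Set (ι → ℝ)) | ∑ i, w i * Real.exp (x i) ≤ R} := by
  classical
  let hi : ι → ℝ := fun i ↦ Real.log (R / w i)
  let lo : ι → ℝ := fun i ↦ -(∑ j ∈ Finset.univ.erase i, p j * hi j) / p i
  have le_hi {x : ι → ℝ} (hx : ∑ i, w i * Real.exp (x i) ≤ R) (i : ι) : x i ≤ hi i := by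
    have : w i * Real.exp (x i) ≤ R :=
      (Finset.single_le_sum (f := fun i ↦ w i * Real.exp (x i))
        (fun j _ ↦ (mul_pos (hw j) (Real.exp_pos _)).le) (Finset.mem_univ i)).trans hx
    have : Real.exp (x i) ≤ R / w i := (le_div_iff₀' (hw i)).2 this
    exact (Real.le_log_iff_exp_le ((Real.exp_pos _).trans_le this)).2 this
  have closed : IsClosed {x ∈ (V : Set (ι → ℝ)) | ∑ i, w i * Real.exp (x i) ≤ R} :=
    V.closed_of_finiteDimensional.inter
      (isClosed_le (f := fun x : ι → ℝ ↦ ∑ i, w i * Real.exp (x i)) (by fun_prop) continuous_const)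
  refine (isCompact_Icc (a := lo) (b := hi)).of_isClosed_subset closed
    fun x ⟨hxV, hxR⟩ ↦ ⟨fun i ↦ ?_, le_hi hxR⟩
  have balance : p i * x i + ∑ j ∈ Finset.univ.erase i, p j * x j = 0 :=
    (Finset.add_sum_erase _ (fun j ↦ p j * x j) (Finset.mem_univ i)).trans (hV x hxV)
  have : ∑ j ∈ Finset.univ.erase i, p j * x j ≤ ∑ j ∈ Finset.univ.erase i, p j * hi j :=
    Finset.sum_le_sum fun j _ ↦ mul_le_mul_of_nonneg_left (le_hi hxR j) (hp j).le
  rw [div_le_iff₀' (hp i)]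
  linarith

lemma exists_isMinOn_sum_exp (hw : ∀ i, 0 < w i) (hp : ∀ i, 0 < p i)
    {V : Submodule ℝ (ι → ℝ)} (hV : ∀ x ∈ V, ∑ i, p i * x i = 0) :
    ∃ x ∈ V, IsMinOn (fun x ↦ ∑ i, w i * Real.exp (x i)) V x := by
  obtain ⟨x, ⟨hxV, hxR⟩, hmin⟩ :=
    (isCompact_setOf_sum_exp_le hw hp hV (∑ i, w i * Real.exp 0)).exists_isMinOn
      ⟨0, V.zero_mem, le_rfl⟩ (f := fun x ↦ ∑ i, w i * Real.exp (x i)) (by fun_prop)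
  refine ⟨x, hxV, fun y hyV ↦ ?_⟩
  rcases le_total (∑ i, w i * Real.exp (y i)) (∑ i, w i * Real.exp 0) with hy | hy
  · exact hmin ⟨hyV, hy⟩
  · exact hxR.trans hy

variable [Fintype κ] {a : ι → κ → ℝ} {c t : κ → ℝ}

/-- The exponential sum with weights `w` and exponents `a`, i.e. the posynomial
`∑ i, w i * ∏ k, x k ^ a i k` in the logarithmic coordinates `x k = exp (t k)`. -/
noncomputable def expSum (w : ι → ℝ) (a : ι → κ → ℝ) (t : κ → ℝ) : ℝ :=
  ∑ i, w i * Real.exp (a i ⬝ᵥ t)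

lemma expSum_pos [Nonempty ι] (hw : ∀ i, 0 < w i) : 0 < expSum w a t :=
  Finset.sum_pos (fun i _ ↦ mul_pos (hw i) (Real.exp_pos _)) Finset.univ_nonempty

lemma log_expSum_sub_dotProduct [Nonempty ι] (hw : ∀ i, 0 < w i) :
    Real.log (expSum w a t) - t ⬝ᵥ c = Real.log (expSum w (fun i ↦ a i - c) t) := by
  have : expSum w (fun i ↦ a i - c) t = expSum w a t / Real.exp (t ⬝ᵥ c) := by
    simp only [expSum, sub_dotProduct, Real.exp_sub, Finset.sum_div, dotProduct_comm c, mul_div]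
  rw [this, Real.log_div (expSum_pos hw).ne' (Real.exp_ne_zero _), Real.log_exp]

theorem exists_forall_log_expSum_sub_le (hw : ∀ i, 0 < w i)
    (hc : c ∈ intrinsicInterior ℝ (convexHull ℝ (Set.range a))) :
    ∃ t, ∀ s, Real.log (expSum w a t) - t ⬝ᵥ c ≤ Real.log (expSum w a s) - s ⬝ᵥ c := by
  have : Nonempty ι := Set.range_nonempty_iff_nonempty.1
    (convexHull_nonempty_iff.1 ⟨c, intrinsicInterior_subset hc⟩)
  obtain ⟨p, hp, hp_sum, rfl⟩ :=
    exists_pos_of_mem_intrinsicInterior_convexHull_range hc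
  set c := ∑ i, p i • a i with hc_def
  let L : (κ → ℝ) →ₗ[ℝ] ι → ℝ := (Matrix.of fun i ↦ a i - c).mulVecLin
  have balanced : ∀ x ∈ L.range, ∑ i, p i * x i = 0 := by
    rintro _ ⟨t, rfl⟩
    calc ∑ i, p i * ((a i - c) ⬝ᵥ t) = (∑ i, p i • (a i - c)) ⬝ᵥ t := by
          simp only [sum_dotProduct, smul_dotProduct, smul_eq_mul]
      _ = 0 := by
          simp only [smul_sub, Finset.sum_sub_distrib, ← Finset.sum_smul, hp_sum, one_smul,
            ← hc_def, sub_self, zero_dotProduct]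
  obtain ⟨_, ⟨t, rfl⟩, hmin⟩ := exists_isMinOn_sum_exp hw hp balanced
  refine ⟨t, fun s ↦ ?_⟩
  rw [log_expSum_sub_dotProduct hw, log_expSum_sub_dotProduct hw]
  exact Real.log_le_log (expSum_pos hw) (hmin ⟨s, rfl⟩)

lemma hasDerivAt_log_expSum [Nonempty ι] (hw : ∀ i, 0 < w i) (v : κ → ℝ) :
    HasDerivAt (fun s : ℝ ↦ Real.log (expSum w a (t + s • v)))
      (∑ i, w i * Real.exp (a i ⬝ᵥ t) / expSum w a t * (a i ⬝ᵥ v)) 0 := by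
  have term (i : ι) : HasDerivAt (fun s : ℝ ↦ w i * Real.exp (a i ⬝ᵥ (t + s • v)))
      (w i * Real.exp (a i ⬝ᵥ t) * (a i ⬝ᵥ v)) 0 := by
    simp only [dotProduct_add, dotProduct_smul, smul_eq_mul]
    convert! ((((hasDerivAt_id (0 : ℝ)).mul_const (a i ⬝ᵥ v)).const_add (a i ⬝ᵥ t)).exp).const_mul
      (w i) using 1
    simp [mul_assoc]
  have sum : HasDerivAt (fun s : ℝ ↦ expSum w a (t + s • v))
      (∑ i, w i * Real.exp (a i ⬝ᵥ t) * (a i ⬝ᵥ v)) 0 := HasDerivAt.fun_sum fun i _ ↦ term i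
  convert! sum.log (expSum_pos hw).ne' using 1
  simp only [Finset.sum_div, zero_smul, add_zero, div_mul_eq_mul_div]

theorem mem_intrinsicInterior_of_hasDerivAt_log_expSum [DecidableEq κ] [Nonempty ι]
    (hw : ∀ i, 0 < w i)
    (h : ∀ k, HasDerivAt (fun s : ℝ ↦ Real.log (expSum w a (t + s • Pi.single k 1))) (c k) 0) :
    c ∈ intrinsicInterior ℝ (convexHull ℝ (Set.range a)) := by
  convert sum_smul_mem_intrinsicInterior_convexHull_range (a := a)
    (p := fun i ↦ w i * Real.exp (a i ⬝ᵥ t) / expSum w a t)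
    (fun i ↦ div_pos (mul_pos (hw i) (Real.exp_pos _)) (expSum_pos hw)) ?_ using 1
  · ext k
    simpa using (h k).unique (hasDerivAt_log_expSum hw _)
  · rw [← Finset.sum_div]
    exact div_self (expSum_pos hw).ne'

end ExponentialSum

section CauchyBinet

variable {R ι P : Type*} [CommRing R] [Fintype ι] [DecidableEq ι] [Fintype P]

lemma det_sum_vecMulVec (u v : P → ι → R) :
    (∑ p, vecMulVec (u p) (v p)).det =
      ∑ f : ι → P, (∏ r, u (f r) r) * (Matrix.of fun r ↦ v (f r)).det := by
  classical
  have rows : (∑ p, vecMulVec (u p) (v p)) = fun r ↦ ∑ p, u p r • v p := by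
    ext r s
    simp [vecMulVec_apply, Matrix.sum_apply]
  calc (∑ p, vecMulVec (u p) (v p)).det
      = detRowAlternating.toMultilinearMap fun r ↦ ∑ p, u p r • v p := by rw [rows]; rfl
    _ = ∑ f : ι → P, detRowAlternating.toMultilinearMap fun r ↦ u (f r) r • v (f r) :=
        MultilinearMap.map_sum _ _
    _ = _ := Finset.sum_congr rfl fun f _ ↦ MultilinearMap.map_smul_univ _ _ _

/-- Cauchy–Binet, with the sum over all maps `ι → P` in place of `card ι`-element subsets of `P`:
each subset is then counted once per enumeration. -/
theorem factorial_mul_det_sum_smul_vecMulVec (a : P → R) (v : P → ι → R) :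
    (Fintype.card ι).factorial * (∑ p, a p • vecMulVec (v p) (v p)).det =
      ∑ f : ι → P, (∏ r, a (f r)) * (Matrix.of fun r ↦ v (f r)).det ^ 2 := by
  classical
  have expand : (∑ p, a p • vecMulVec (v p) (v p)).det =
      ∑ f : ι → P, (∏ r, a (f r)) * (∏ r, v (f r) r) * (Matrix.of fun r ↦ v (f r)).det := by
    simp only [← smul_vecMulVec, det_sum_vecMulVec, Pi.smul_apply, smul_eq_mul,
      Finset.prod_mul_distrib]
  have reindex (σ : Equiv.Perm ι) : (∑ p, a p • vecMulVec (v p) (v p)).det =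
      ∑ f : ι → P, (∏ r, a (f r)) * ((Equiv.Perm.sign σ : ℤ) * ∏ r, v (f (σ r)) r) *
        (Matrix.of fun r ↦ v (f r)).det := by
    rw [expand, ← (Equiv.arrowCongr σ.symm (Equiv.refl P)).sum_comp]
    refine Finset.sum_congr rfl fun f _ ↦ ?_
    simp only [Equiv.arrowCongr_apply, Equiv.coe_refl, Equiv.symm_symm, Function.comp_apply, id]
    have permute : (Matrix.of fun r ↦ v (f (σ r))).det =
        (Equiv.Perm.sign σ : ℤ) * (Matrix.of fun r ↦ v (f r)).det :=
      det_permute σ (Matrix.of fun r ↦ v (f r))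
    rw [Equiv.prod_comp σ fun r ↦ a (f r), permute]
    ring
  calc (Fintype.card ι).factorial * (∑ p, a p • vecMulVec (v p) (v p)).det
      = ∑ _σ : Equiv.Perm ι, (∑ p, a p • vecMulVec (v p) (v p)).det := by
        rw [Finset.sum_const, Finset.card_univ, Fintype.card_perm, nsmul_eq_mul]
    _ = ∑ f : ι → P, (∏ r, a (f r)) * (∑ σ : Equiv.Perm ι, (Equiv.Perm.sign σ : ℤ) *
          ∏ r, v (f (σ r)) r) * (Matrix.of fun r ↦ v (f r)).det := by
        rw [Finset.sum_congr rfl fun σ _ ↦ reindex σ, Finset.sum_comm]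
        simp only [Finset.mul_sum, Finset.sum_mul]
    _ = _ := by
        refine Finset.sum_congr rfl fun f _ ↦ ?_
        rw [det_apply' (Matrix.of fun r ↦ v (f r))]
        simp only [Matrix.of_apply]
        ring

end CauchyBinet

section Greedy

variable {K V P α : Type*} [Field K] [AddCommGroup V] [Module K V] [LinearOrder α]

/-- The greedy algorithm: scan the vectors in order of decreasing weight `g`, keeping those outside
the span of what has been kept so far. -/
lemma exists_linearIndepOn_forall_isUpperSet_span_eq (v : P → V) (g : P → α) (s : Finset P) :
    ∃ S ⊆ (s : Set P), LinearIndepOn K v S ∧ ∀ U : Set α, IsUpperSet U →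
      Submodule.span K (v '' (S ∩ g ⁻¹' U)) = Submodule.span K (v '' (s ∩ g ⁻¹' U)) := by
  classical
  induction s using Finset.induction_on_min_value g with
  | empty => exact ⟨∅, by simp, by simp, by simp⟩
  | insert p s _ hp ih =>
    obtain ⟨S, hSs, hS, hspan⟩ := ih
    obtain ⟨T, hTs, hST, hsT, hT⟩ := exists_linearIndepOn_extension hS
      (hSs.trans (Finset.coe_subset.2 (Finset.subset_insert p s)))
    refine ⟨T, hTs, hT, fun U hU ↦ le_antisymm (by gcongr) ?_⟩
    by_cases hpU : g p ∈ U
    · have all_mem : ((insert p s : Finset P) : Set P) ⊆ g ⁻¹' U := fun q hq ↦ by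
        rcases Finset.mem_insert.1 hq with rfl | hq
        exacts [hpU, hU (hp q hq) hpU]
      rw [Set.inter_eq_left.2 all_mem, Set.inter_eq_left.2 (hTs.trans all_mem)]
      exact Submodule.span_le.2 hsT
    · rw [Finset.coe_insert, Set.insert_inter_of_notMem (by simpa using hpU), ← hspan U hU]
      gcongr

variable {ι : Type*} [Fintype ι]

/-- The ways of choosing, with labels in `ι`, a basis of `K^ι` among the vectors `v p`. -/
abbrev BasisChoice (v : P → ι → K) : Type _ := {f : ι → P // LinearIndependent K fun r ↦ v (f r)}

lemma exists_basisChoice_forall_card_eq_finrank [Finite P] {v : P → ι → K}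
    (hv : Submodule.span K (Set.range v) = ⊤) (g : P → α) :
    ∃ f : BasisChoice v, ∀ τ,
      Finset.card {r | τ ≤ g (f.1 r)} = (v '' (g ⁻¹' Set.Ici τ)).finrank K := by
  classical
  have := Fintype.ofFinite P
  obtain ⟨S, -, hS, hspan⟩ :=
    exists_linearIndepOn_forall_isUpperSet_span_eq (K := K) v g Finset.univ
  simp only [Finset.coe_univ, Set.univ_inter] at hspan
  have card_S : Fintype.card ι = Fintype.card S := by
    rw [← finrank_span_eq_card hS, ← Set.image_eq_range, ← Set.inter_univ S,
      ← Set.preimage_univ (f := g), hspan _ isUpperSet_univ, Set.preimage_univ, Set.image_univ, hv,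
      finrank_top, Module.finrank_fintype_fun_eq_card]
  let e := Fintype.equivOfCardEq card_S
  refine ⟨⟨fun r ↦ e r, hS.comp e e.injective⟩, fun τ ↦ ?_⟩
  have range_eq : (Set.range fun r : {r // τ ≤ g (e r)} ↦ v (e r)) =
      v '' (S ∩ g ⁻¹' Set.Ici τ) := by
    ext x
    constructor
    · rintro ⟨⟨r, hr⟩, rfl⟩
      exact ⟨e r, ⟨(e r).2, hr⟩, rfl⟩
    · rintro ⟨p, ⟨hpS, hp⟩, rfl⟩
      exact ⟨⟨e.symm ⟨p, hpS⟩, by simpa using hp⟩, by simp⟩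
  rw [Set.finrank, ← hspan _ (isUpperSet_Ici τ), ← range_eq, ← Fintype.card_subtype]
  exact (finrank_span_eq_card (hS.comp _ (e.injective.comp Subtype.val_injective))).symm

end Greedy

section RankPolytope

lemma mul_sum_le_sum_mul_of_forall_upper_sum_nonneg (T : Finset ℝ) {z : ℝ → ℝ}
    (hz : ∀ τ ∈ T, 0 ≤ ∑ σ ∈ T with τ ≤ σ, z σ) {τ : ℝ} (hτ : ∀ σ ∈ T, τ ≤ σ) :
    τ * ∑ σ ∈ T, z σ ≤ ∑ σ ∈ T, σ * z σ := by
  induction T using Finset.induction_on_min generalizing τ with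
  | empty => simp
  | insert a T ha ih =>
    have ha' : a ∉ T := fun h ↦ (ha a h).false
    have total_nonneg : 0 ≤ ∑ σ ∈ insert a T, z σ := by
      have := hz a (by simp)
      rwa [Finset.filter_true_of_mem (by simpa using fun σ hσ ↦ (ha σ hσ).le)] at this
    have tail_nonneg (τ) (hτ : τ ∈ T) : 0 ≤ ∑ σ ∈ T with τ ≤ σ, z σ := by
      simpa [Finset.filter_insert, (ha τ hτ).not_ge] using hz τ (by simp [hτ])
    have tail := ih tail_nonneg (τ := a) fun σ hσ ↦ (ha σ hσ).le
    calc τ * ∑ σ ∈ insert a T, z σ ≤ a * ∑ σ ∈ insert a T, z σ := by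
          gcongr
          exact hτ a (by simp)
      _ ≤ ∑ σ ∈ insert a T, σ * z σ := by
          rw [Finset.sum_insert ha', Finset.sum_insert ha', mul_add]
          gcongr

lemma sum_mul_le_sum_mul_of_forall_sum_le {κ : Type*} [Fintype κ] {t x y : κ → ℝ}
    (hsum : ∑ k, x k = ∑ k, y k) (h : ∀ τ, ∑ k with τ ≤ t k, x k ≤ ∑ k with τ ≤ t k, y k) :
    ∑ k, t k * x k ≤ ∑ k, t k * y k := by
  let T := Finset.univ.image t
  let z (σ : ℝ) : ℝ := ∑ k with t k = σ, (y k - x k)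
  have t_mem (k : κ) : t k ∈ T := Finset.mem_image_of_mem t (Finset.mem_univ k)
  have upper_sum (τ : ℝ) : ∑ σ ∈ T with τ ≤ σ, z σ = ∑ k with τ ≤ t k, (y k - x k) := by
    rw [← Finset.sum_fiberwise_of_maps_to (s := {k | τ ≤ t k}) (t := T.filter (τ ≤ ·)) (g := t)
      (by simp [t_mem])]
    refine Finset.sum_congr rfl fun σ hσ ↦ Finset.sum_congr ?_ fun _ _ ↦ rfl
    ext k
    have := (Finset.mem_filter.1 hσ).2
    simp only [Finset.mem_filter, Finset.mem_univ, true_and]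
    exact ⟨fun hk ↦ ⟨hk ▸ this, hk⟩, And.right⟩
  have total : ∑ σ ∈ T, z σ = 0 := by
    rw [Finset.sum_fiberwise_of_maps_to fun k _ ↦ t_mem k, Finset.sum_sub_distrib, hsum, sub_self]
  have weighted_total : ∑ σ ∈ T, σ * z σ = ∑ k, t k * (y k - x k) := by
    rw [← Finset.sum_fiberwise_of_maps_to fun k _ ↦ t_mem k]
    refine Finset.sum_congr rfl fun σ _ ↦ ?_
    rw [Finset.mul_sum]
    exact Finset.sum_congr rfl fun k hk ↦ by rw [(Finset.mem_filter.1 hk).2]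
  obtain ⟨τ, hτ⟩ := T.bddBelow
  have := mul_sum_le_sum_mul_of_forall_upper_sum_nonneg T (z := z) (fun τ _ ↦ by
    rw [upper_sum, Finset.sum_sub_distrib]
    exact sub_nonneg.2 (h τ)) fun σ hσ ↦ hτ hσ
  rw [total, weighted_total] at this
  simpa [mul_sub] using this

variable {ι P κ : Type*} [Fintype ι]

section ColorCount

variable [DecidableEq κ]

/-- The vector counting how many members of the family `f` have each colour `π`. -/
def colorCount (π : P → κ) (f : ι → P) : κ → ℝ :=
  fun k ↦ Finset.card {r | π (f r) = k}

lemma sum_colorCount (π : P → κ) (f : ι → P) (I : Finset κ) :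
    ∑ k ∈ I, colorCount π f k = Finset.card {r | π (f r) ∈ I} := by
  rw [Finset.card_eq_sum_card_fiberwise (f := fun r ↦ π (f r)) (t := I) (by intro; simp)]
  push_cast
  refine Finset.sum_congr rfl fun k hk ↦ ?_
  simp only [colorCount, Finset.filter_filter]
  congr! 3
  grind

end ColorCount

variable [Fintype κ] {v : P → ι → ℝ} {π : P → κ}

/-- The base polytope of the rank function `I ↦ dim span {v p | π p ∈ I}` of a configuration `v` of
vectors spanning `ℝ^ι`, coloured by `π`. -/
def rankPolytope (v : P → ι → ℝ) (π : P → κ) : Set (κ → ℝ) :=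
  {x | (∀ k, 0 ≤ x k) ∧ ∑ k, x k = Fintype.card ι ∧
    ∀ I : Finset κ, ∑ k ∈ I, x k ≤ (v '' {p | π p ∈ I}).finrank ℝ}

lemma convex_rankPolytope : Convex ℝ (rankPolytope v π) := by
  rintro x ⟨hx, hx_sum, hx_le⟩ y ⟨hy, hy_sum, hy_le⟩ a b ha hb hab
  have sum_eq (I : Finset κ) :
      ∑ k ∈ I, (a • x + b • y) k = a * ∑ k ∈ I, x k + b * ∑ k ∈ I, y k := by
    simp [Finset.sum_add_distrib, Finset.mul_sum]
  refine ⟨fun k ↦ add_nonneg (mul_nonneg ha (hx k)) (mul_nonneg hb (hy k)), ?_, fun I ↦ ?_⟩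
  · rw [sum_eq, hx_sum, hy_sum, ← add_mul, hab, one_mul]
  · rw [sum_eq]
    exact convex_Iic _ (Set.mem_Iic.2 (hx_le I)) (Set.mem_Iic.2 (hy_le I)) ha hb hab

lemma span_range_eq_top_of_mem_rankPolytope {x : κ → ℝ} (hx : x ∈ rankPolytope v π) :
    Submodule.span ℝ (Set.range v) = ⊤ := by
  refine Submodule.eq_top_of_finrank_eq (le_antisymm (Submodule.finrank_le _) ?_)
  have all : v '' {p | π p ∈ Finset.univ} = Set.range v := by simp
  have := hx.2.2 Finset.univ
  rw [hx.2.1, all, Nat.cast_le] at this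
  rwa [Module.finrank_fintype_fun_eq_card]

variable [DecidableEq κ]

lemma colorCount_mem_rankPolytope (f : BasisChoice v) : colorCount π f.1 ∈ rankPolytope v π := by
  refine ⟨fun k ↦ Nat.cast_nonneg _, by simp [sum_colorCount], fun I ↦ ?_⟩
  rw [sum_colorCount, ← Fintype.card_subtype, Nat.cast_le,
    ← finrank_span_eq_card (f.2.comp _ Subtype.val_injective)]
  refine Submodule.finrank_mono (Submodule.span_mono ?_)
  rintro _ ⟨⟨r, hr⟩, rfl⟩
  exact ⟨f.1 r, hr, rfl⟩

lemma exists_basisChoice_sum_mul_le [Finite P] {x : κ → ℝ} (hx : x ∈ rankPolytope v π)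
    (t : κ → ℝ) : ∃ f : BasisChoice v, ∑ k, t k * x k ≤ ∑ k, t k * colorCount π f.1 k := by
  obtain ⟨f, hf⟩ := exists_basisChoice_forall_card_eq_finrank
    (span_range_eq_top_of_mem_rankPolytope hx) fun p ↦ t (π p)
  refine ⟨f, sum_mul_le_sum_mul_of_forall_sum_le ?_ fun τ ↦ ?_⟩
  · rw [hx.2.1, (colorCount_mem_rankPolytope f).2.1]
  · rw [sum_colorCount]
    simpa [hf τ, Set.preimage] using hx.2.2 {k | τ ≤ t k}

/-- By Edmonds' greedy argument, `⟨t, ·⟩` attains its maximum over the whole polytope at the colour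
count of a basis, so no point can be separated from the hull. -/
theorem rankPolytope_eq_convexHull [Finite P] :
    rankPolytope v π = convexHull ℝ (Set.range fun f : BasisChoice v ↦ colorCount π f.1) := by
  refine Set.Subset.antisymm (fun x hx ↦ ?_) (convexHull_min ?_ convex_rankPolytope)
  · by_contra hx_hull
    obtain ⟨φ, u, hlt, hux⟩ := geometric_hahn_banach_closed_point (convex_convexHull ℝ _)
      ((Set.finite_range _).isClosed_convexHull ℝ) hx_hull
    let t (k : κ) : ℝ := φ (Pi.single k 1)
    have φ_eq (y : κ → ℝ) : φ y = ∑ k, t k * y k := by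
      conv_lhs => rw [pi_eq_sum_univ' y]
      simp [t, mul_comm]
    obtain ⟨f, hf⟩ := exists_basisChoice_sum_mul_le hx t
    rw [← φ_eq, ← φ_eq] at hf
    exact (hux.trans_le hf).not_gt (hlt _ (subset_convexHull ℝ _ ⟨f, rfl⟩))
  · rintro _ ⟨f, rfl⟩
    exact colorCount_mem_rankPolytope f

end RankPolytope

section BasisExpansion

variable {ι P κ : Type*} [Fintype ι] [DecidableEq ι] {v : P → ι → ℝ} {π : P → κ}

noncomputable instance [Finite P] : Fintype (BasisChoice v) := Fintype.ofFinite _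

/-- The squared volume spanned by a choice of basis, divided by `(card ι)!` because a set of basis
vectors is counted once for each labelling by `ι`. -/
noncomputable def basisWeight (f : BasisChoice v) : ℝ :=
  (Matrix.of fun r ↦ v (f.1 r)).det ^ 2 / (Fintype.card ι).factorial

lemma det_ne_zero_iff_linearIndependent (f : ι → P) :
    (Matrix.of fun r ↦ v (f r)).det ≠ 0 ↔ LinearIndependent ℝ fun r ↦ v (f r) := by
  rw [← isUnit_iff_ne_zero, ← isUnit_iff_isUnit_det, ← linearIndependent_rows_iff_isUnit]
  rfl

lemma basisWeight_pos (f : BasisChoice v) : 0 < basisWeight f := by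
  have := (det_ne_zero_iff_linearIndependent f.1).2 f.2
  unfold basisWeight
  positivity

theorem det_sum_exp_smul_vecMulVec [Fintype P] [Fintype κ] [DecidableEq κ] (t : κ → ℝ) :
    (∑ p, Real.exp (t (π p)) • vecMulVec (v p) (v p)).det =
      expSum basisWeight (fun f : BasisChoice v ↦ colorCount π f.1) t := by
  classical
  have exponent (f : ι → P) : ∏ r, Real.exp (t (π (f r))) = Real.exp (colorCount π f ⬝ᵥ t) := by
    rw [← Real.exp_sum, ← Finset.sum_fiberwise_of_maps_to
      (g := fun r ↦ π (f r)) (t := Finset.univ) (by simp)]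
    congr 1
    refine Finset.sum_congr rfl fun k _ ↦ ?_
    rw [Finset.sum_congr rfl fun r hr ↦ by rw [(Finset.mem_filter.1 hr).2]]
    simp [colorCount]
  refine mul_left_cancel₀ (Nat.cast_ne_zero.2 (Fintype.card ι).factorial_ne_zero : (_ : ℝ) ≠ 0) ?_
  rw [factorial_mul_det_sum_smul_vecMulVec, expSum, Finset.mul_sum]
  symm
  refine Fintype.sum_of_injective Subtype.val Subtype.val_injective _ _ (fun f hf ↦ ?_) fun f ↦ ?_
  · have : (Matrix.of fun r ↦ v (f r)).det = 0 := by
      by_contra h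
      exact hf ⟨⟨f, (det_ne_zero_iff_linearIndependent f).1 h⟩, rfl⟩
    simp [this]
  · rw [exponent, basisWeight]
    field_simp

end BasisExpansion

section LogDet

variable {ι : Type*} [Fintype ι] [DecidableEq ι]

lemma hasDerivAt_log_det_one_add_smul (H : Matrix ι ι ℝ) :
    HasDerivAt (fun r : ℝ ↦ Real.log (1 + r • H).det) H.trace 0 := by
  let q := (det (1 + (Polynomial.X : Polynomial ℝ) • H.map Polynomial.C)).divX.divX
  have det_deriv : HasDerivAt (fun r : ℝ ↦ (1 + r • H).det) H.trace 0 := by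
    rw [funext fun r : ℝ ↦ det_one_add_smul r H]
    convert! (((hasDerivAt_id (0 : ℝ)).const_mul H.trace).const_add 1).add
      ((q.hasDerivAt (0 : ℝ)).mul ((hasDerivAt_id (0 : ℝ)).pow 2)) using 1
    simp
  simpa using det_deriv.log (by simp)

lemma hasDerivAt_log_det_add_smul {M : Matrix ι ι ℝ} (hM : IsUnit M.det)
    (B : Matrix ι ι ℝ) :
    HasDerivAt (fun r : ℝ ↦ Real.log (M + r • B).det) (M⁻¹ * B).trace 0 := by
  have factor (r : ℝ) : (M + r • B).det = M.det * (1 + r • (M⁻¹ * B)).det := by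
    rw [← det_mul, Matrix.mul_add, Matrix.mul_one, Matrix.mul_smul, ← Matrix.mul_assoc,
      mul_nonsing_inv _ hM, Matrix.one_mul]
  have nonsingular : ∀ᶠ r in nhds (0 : ℝ), (1 + r • (M⁻¹ * B)).det ≠ 0 :=
    (show ContinuousAt (fun r : ℝ ↦ (1 + r • (M⁻¹ * B)).det) 0 by fun_prop).eventually_ne (by simp)
  refine ((hasDerivAt_log_det_one_add_smul (M⁻¹ * B)).const_add
    (Real.log M.det)).congr_of_eventuallyEq ?_
  filter_upwards [nonsingular] with r hr
  rw [factor, Real.log_mul hM.ne_zero hr]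

open scoped MatrixOrder in
lemma exists_mul_mul_transpose_eq_one {M : Matrix ι ι ℝ} (hM : M.PosDef) :
    ∃ A : Matrix ι ι ℝ, IsUnit A.det ∧ A * M * Aᵀ = 1 := by
  obtain ⟨B, hB⟩ := CStarAlgebra.nonneg_iff_eq_star_mul_self.1 hM.posSemidef.nonneg
  rw [star_eq_conjTranspose, conjTranspose_eq_transpose_of_trivial] at hB
  have hBdet : IsUnit B.det := isUnit_iff_ne_zero.2 fun h ↦ by
    simpa [hB, h] using hM.det_pos
  have hBdet' : IsUnit Bᵀ.det := by rwa [det_transpose]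
  refine ⟨(Bᵀ)⁻¹, isUnit_nonsing_inv_det _ hBdet', ?_⟩
  rw [hB, ← Matrix.mul_assoc, nonsing_inv_mul _ hBdet', Matrix.one_mul, transpose_nonsing_inv,
    transpose_transpose, mul_nonsing_inv _ hBdet]

lemma inv_eq_transpose_mul_of_mul_mul_transpose_eq_one {A M : Matrix ι ι ℝ}
    (h : A * M * Aᵀ = 1) : M⁻¹ = Aᵀ * A := by
  refine inv_eq_left_inv ?_
  rw [Matrix.mul_assoc]
  exact mul_eq_one_comm.1 h

end LogDet

section Frame

variable {d n : ℕ} {m : Fin n → ℕ} {F : ∀ i : Fin n, Matrix (Fin d) (Fin (m i)) ℝ}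
  {c t : Fin n → ℝ}

lemma finrank_image_col (I : Finset (Fin n)) :
    (col F '' {p | p.1 ∈ I}).finrank ℝ = Module.finrank ℝ ↥(⨆ i ∈ I, colSpan (F i)) := by
  suffices Submodule.span ℝ (col F '' {p | p.1 ∈ I}) = ⨆ i ∈ I, colSpan (F i) by
    rw [Set.finrank, this]
  simp only [colSpan, ← Submodule.span_iUnion₂]
  congr 1
  ext x
  simp only [Set.mem_image, Set.mem_ofPred_eq, Sigma.exists, Set.mem_iUnion]
  exact ⟨fun ⟨i, j, hi, h⟩ ↦ ⟨i, hi, j, h⟩, fun ⟨i, hi, j, h⟩ ↦ ⟨i, j, hi, h⟩⟩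

theorem orbitPolytope_eq_convexHull :
    orbitPolytope F =
      convexHull ℝ (Set.range fun f : BasisChoice (col F) ↦ colorCount Sigma.fst f.1) := by
  rw [← rankPolytope_eq_convexHull]
  simp only [orbitPolytope, rankPolytope, finrank_image_col, Fintype.card_fin]

/-- The frame operator `∑ e^{tᵢ} Xᵢ Xᵢᵀ` of the rescaled frame `(e^{tᵢ/2} Xᵢ)`, whose
log-determinant is `Φ_F(t)`. -/
noncomputable def weightedFrameOp (F : ∀ i : Fin n, Matrix (Fin d) (Fin (m i)) ℝ)
    (t : Fin n → ℝ) : Matrix (Fin d) (Fin d) ℝ :=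
  ∑ i, Real.exp (t i) • (F i * (F i)ᵀ)

lemma weightedFrameOp_eq_sum_vecMulVec :
    weightedFrameOp F t = ∑ p, Real.exp (t p.1) • vecMulVec (col F p) (col F p) := by
  have gram (i : Fin n) : F i * (F i)ᵀ = ∑ j, vecMulVec (col F ⟨i, j⟩) (col F ⟨i, j⟩) := by
    ext r s
    simp [Matrix.mul_apply, Matrix.sum_apply, vecMulVec_apply, col]
  simp only [weightedFrameOp, Fintype.sum_sigma, gram, Finset.smul_sum]

lemma weightedFrameOp_zero : weightedFrameOp F 0 = frameOp F := by
  simp [weightedFrameOp, frameOp]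

lemma det_weightedFrameOp :
    (weightedFrameOp F t).det =
      expSum basisWeight (fun f : BasisChoice (col F) ↦ colorCount Sigma.fst f.1) t := by
  rw [weightedFrameOp_eq_sum_vecMulVec, det_sum_exp_smul_vecMulVec]

lemma Phi_eq_log_expSum :
    Phi F t = Real.log
      (expSum basisWeight (fun f : BasisChoice (col F) ↦ colorCount Sigma.fst f.1) t) :=
  congrArg Real.log det_weightedFrameOp

lemma IsMatrixFrame.nonempty_basisChoice (hF : IsMatrixFrame F) :
    Nonempty (BasisChoice (col F)) := by
  by_contra h
  rw [not_nonempty_iff] at h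
  have := hF.det_pos
  simp [← weightedFrameOp_zero, det_weightedFrameOp, expSum] at this

lemma weightedFrameOp_add_single (i : Fin n) (s : ℝ) :
    weightedFrameOp F (t + s • Pi.single i 1) =
      weightedFrameOp F t + (Real.exp (t i) * (Real.exp s - 1)) • (F i * (F i)ᵀ) := by
  have term (j : Fin n) : Real.exp ((t + s • Pi.single i 1 : Fin n → ℝ) j) • (F j * (F j)ᵀ) =
      Real.exp (t j) • (F j * (F j)ᵀ) +
        if j = i then (Real.exp (t i) * (Real.exp s - 1)) • (F i * (F i)ᵀ) else 0 := by
    rcases eq_or_ne j i with rfl | hji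
    · rw [if_pos rfl, Pi.add_apply, Pi.smul_apply, Pi.single_eq_same, smul_eq_mul, mul_one,
        Real.exp_add]
      module
    · simp [hji]
  simp only [weightedFrameOp, term, Finset.sum_add_distrib, Finset.sum_ite_eq', Finset.mem_univ,
    if_true]

lemma exists_forall_obj_le_of_mem_intrinsicInterior
    (hc : c ∈ intrinsicInterior ℝ (orbitPolytope F)) : ∃ t, ∀ s, obj F c t ≤ obj F c s := by
  simp only [obj, Phi_eq_log_expSum]
  exact exists_forall_log_expSum_sub_le basisWeight_pos (orbitPolytope_eq_convexHull (F := F) ▸ hc)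

/-- The leverage score of the `i`-th block of the rescaled frame `(e^{tᵢ/2} Xᵢ)`; it is the `i`-th
partial derivative of `Φ_F`. -/
noncomputable def leverage (F : ∀ i : Fin n, Matrix (Fin d) (Fin (m i)) ℝ) (t : Fin n → ℝ) :
    Fin n → ℝ :=
  fun i ↦ Real.exp (t i) * ((weightedFrameOp F t)⁻¹ * (F i * (F i)ᵀ)).trace

namespace IsMatrixFrame

lemma det_weightedFrameOp_pos (hF : IsMatrixFrame F) (t : Fin n → ℝ) :
    0 < (weightedFrameOp F t).det := by
  have := hF.nonempty_basisChoice
  exact det_weightedFrameOp ▸ expSum_pos basisWeight_pos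

lemma posDef_weightedFrameOp (hF : IsMatrixFrame F) (t : Fin n → ℝ) :
    (weightedFrameOp F t).PosDef := by
  have : (weightedFrameOp F t).PosSemidef := posSemidef_sum _ fun i _ ↦
    (conjTranspose_eq_transpose_of_trivial (F i) ▸ posSemidef_self_mul_conjTranspose (F i)).smul
      (Real.exp_nonneg _)
  rw [this.posDef_iff_isUnit, isUnit_iff_isUnit_det]
  exact (hF.det_weightedFrameOp_pos t).ne'.isUnit

lemma hasDerivAt_Phi (hF : IsMatrixFrame F) (t : Fin n → ℝ) (i : Fin n) :
    HasDerivAt (fun s : ℝ ↦ Phi F (t + s • Pi.single i 1)) (leverage F t i) 0 := by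
  have scalar : HasDerivAt (fun s ↦ Real.exp (t i) * (Real.exp s - 1)) (Real.exp (t i)) 0 := by
    simpa using ((Real.hasDerivAt_exp 0).sub_const 1).const_mul (Real.exp (t i))
  have logdet := hasDerivAt_log_det_add_smul
    (hF.det_weightedFrameOp_pos t).ne'.isUnit (F i * (F i)ᵀ)
  have := logdet.comp_of_eq 0 scalar (by simp)
  rw [leverage, mul_comm]
  simp only [Function.comp_def, ← weightedFrameOp_add_single] at this
  exact this

lemma leverage_eq_of_forall_obj_le (hF : IsMatrixFrame F) (ht : ∀ s, obj F c t ≤ obj F c s) :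
    leverage F t = c := by
  ext i
  have deriv_obj : HasDerivAt (fun s : ℝ ↦ obj F c (t + s • Pi.single i 1))
      (leverage F t i - c i) 0 := by
    have linear (s : ℝ) : ∑ j, (t + s • Pi.single i 1 : Fin n → ℝ) j * c j =
        ∑ j, t j * c j + s * c i := by
      simp [add_mul, Finset.sum_add_distrib, Pi.single_apply]
    simp only [obj, linear]
    exact (hF.hasDerivAt_Phi t i).sub ((hasDerivAt_mul_const (c i)).const_add (∑ j, t j * c j))
  refine sub_eq_zero.1 (IsLocalMin.hasDerivAt_eq_zero (.of_forall fun s ↦ ?_) deriv_obj)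
  simpa using ht _

lemma leverage_mem_intrinsicInterior (hF : IsMatrixFrame F) (t : Fin n → ℝ) :
    leverage F t ∈ intrinsicInterior ℝ (orbitPolytope F) := by
  have := hF.nonempty_basisChoice
  rw [orbitPolytope_eq_convexHull]
  refine mem_intrinsicInterior_of_hasDerivAt_log_expSum (t := t) basisWeight_pos fun i ↦ ?_
  simpa only [Phi_eq_log_expSum] using hF.hasDerivAt_Phi t i

end IsMatrixFrame

lemma frobSq_nonneg {α β : Type*} [Fintype α] [Fintype β] (X : Matrix α β ℝ) : 0 ≤ frobSq X :=
  Finset.sum_nonneg fun _ _ ↦ Finset.sum_nonneg fun _ _ ↦ sq_nonneg _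

lemma frobSq_eq_trace {α β : Type*} [Fintype α] [Fintype β] (X : Matrix α β ℝ) :
    frobSq X = (X * Xᵀ).trace := by
  simp [frobSq, Matrix.trace, Matrix.mul_apply, sq]

lemma mul_weightedFrameOp_mul_transpose (A : Matrix (Fin d) (Fin d) ℝ) :
    A * weightedFrameOp F t * Aᵀ = ∑ i, Real.exp (t i) • ((A * F i) * (A * F i)ᵀ) := by
  simp only [weightedFrameOp, Matrix.mul_sum, Matrix.sum_mul, Matrix.mul_smul, Matrix.smul_mul,
    transpose_mul, Matrix.mul_assoc]

lemma leverage_eq_exp_mul_frobSq {A : Matrix (Fin d) (Fin d) ℝ}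
    (hA : A * weightedFrameOp F t * Aᵀ = 1) (i : Fin n) :
    leverage F t i = Real.exp (t i) * frobSq (A * F i) := by
  rw [leverage, inv_eq_transpose_mul_of_mul_mul_transpose_eq_one hA, frobSq_eq_trace,
    Matrix.mul_assoc, trace_mul_comm, transpose_mul]
  simp only [Matrix.mul_assoc]

lemma transformsToRIF_of_leverage_eq (hc : ∀ i, 0 < c i) (ht : leverage F t = c)
    {A : Matrix (Fin d) (Fin d) ℝ} (hA : A * weightedFrameOp F t * Aᵀ = 1) :
    TransformsToRIF F c A := by
  rw [TransformsToRIF, ← hA, mul_weightedFrameOp_mul_transpose]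
  refine Finset.sum_congr rfl fun i _ ↦ ?_
  have hci : c i = Real.exp (t i) * frobSq (A * F i) := by
    rw [← leverage_eq_exp_mul_frobSq hA, ht]
  rw [hci, mul_div_cancel_right₀ _ (right_ne_zero_of_mul (hci ▸ (hc i).ne'))]

namespace TransformsToRIF

variable {A : Matrix (Fin d) (Fin d) ℝ}

lemma frobSq_pos (hA : TransformsToRIF F c A) (hc : ∀ i, 0 < c i) (hsum : ∑ i, c i = d)
    (i : Fin n) : 0 < frobSq (A * F i) := by
  have trace_eq : ∑ j, c j / frobSq (A * F j) * frobSq (A * F j) = ∑ j, c j := by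
    rw [TransformsToRIF] at hA
    simpa only [trace_sum, trace_smul, ← frobSq_eq_trace, smul_eq_mul, trace_one,
      Fintype.card_fin, ← hsum] using congrArg Matrix.trace hA
  have term_le (j : Fin n) : c j / frobSq (A * F j) * frobSq (A * F j) ≤ c j := by
    rw [div_mul_eq_mul_div, mul_div_assoc]
    exact mul_le_of_le_one_right (hc j).le (div_self_le_one _)
  refine (frobSq_nonneg _).lt_of_ne' fun h ↦ (hc i).ne ?_
  simpa [h] using (Finset.sum_eq_sum_iff_of_le fun j _ ↦ term_le j).1 trace_eq i (Finset.mem_univ i)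

lemma exists_leverage_eq (hA : TransformsToRIF F c A) (hc : ∀ i, 0 < c i)
    (hsum : ∑ i, c i = d) : ∃ t, leverage F t = c := by
  have hpos := hA.frobSq_pos hc hsum
  let t (i : Fin n) : ℝ := Real.log (c i / frobSq (A * F i))
  have exp_t (i : Fin n) : Real.exp (t i) = c i / frobSq (A * F i) :=
    Real.exp_log (div_pos (hc i) (hpos i))
  have whitens : A * weightedFrameOp F t * Aᵀ = 1 := by
    rw [mul_weightedFrameOp_mul_transpose]
    simp only [exp_t]
    exact hA
  refine ⟨t, funext fun i ↦ ?_⟩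
  rw [leverage_eq_exp_mul_frobSq whitens, exp_t, div_mul_cancel₀ _ (hpos i).ne']

end TransformsToRIF

end Frame

theorem matrix_radial_isotropy_general {d n : ℕ} {m : Fin n → ℕ}
    (F : ∀ i : Fin n, Matrix (Fin d) (Fin (m i)) ℝ) (hF : IsMatrixFrame F)
    (c : Fin n → ℝ) (hc : ∀ i, 0 < c i) (hsum : ∑ i, c i = d) :
    List.TFAE
      [c ∈ intrinsicInterior ℝ (orbitPolytope F),
       ∃ A : Matrix (Fin d) (Fin d) ℝ, IsUnit A.det ∧ TransformsToRIF F c A,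
       ∃ t : Fin n → ℝ, ∀ s : Fin n → ℝ, obj F c t ≤ obj F c s] := by
  tfae_have 1 → 3 := exists_forall_obj_le_of_mem_intrinsicInterior
  tfae_have 3 → 2 := fun ⟨t, ht⟩ ↦
    have ⟨A, hA, hAM⟩ := exists_mul_mul_transpose_eq_one (hF.posDef_weightedFrameOp t)
    ⟨A, hA, transformsToRIF_of_leverage_eq hc (hF.leverage_eq_of_forall_obj_le ht) hAM⟩
  tfae_have 2 → 1 := fun ⟨A, _, hA⟩ ↦
    have ⟨t, ht⟩ := hA.exists_leverage_eq hc hsum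
    ht ▸ hF.leverage_mem_intrinsicInterior t
  tfae_finish

/-- **Matrix Radial Isotropy (Theorem 1(3), generic case).**  For a generic matrix frame `F`
and positive rational weights `c` with `∑ cᵢ = d`, the following are equivalent:
(i) `c` lies in the relative (intrinsic) interior of the orbit polytope `K_F`;
(ii) `(F, c)` can be transformed into a radial isotropic frame by some `A ∈ GL(d, ℝ)`;
(iii) the infimum defining `f_F(c)` is finite and attained at some `t ∈ ℝⁿ`. -/
theorem matrix_radial_isotropy {d n : ℕ} {m : Fin n → ℕ}
    (F : ∀ i : Fin n, Matrix (Fin d) (Fin (m i)) ℝ)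
    (hF : IsMatrixFrame F) (hgen : Generic F)
    (c : Fin n → ℚ) (hc : ∀ i, 0 < c i) (hsum : ∑ i, (c i : ℝ) = d) :
    List.TFAE
      [(fun i => (c i : ℝ)) ∈ intrinsicInterior ℝ (orbitPolytope F),
       ∃ A : Matrix (Fin d) (Fin d) ℝ, IsUnit A.det ∧
         TransformsToRIF F (fun i => (c i : ℝ)) A,
       ∃ t : Fin n → ℝ, ∀ s : Fin n → ℝ,
         obj F (fun i => (c i : ℝ)) t ≤ obj F (fun i => (c i : ℝ)) s] :=
  matrix_radial_isotropy_general F hF _ (fun i ↦ Rat.cast_pos.2 (hc i)) hsum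

end MFrames
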